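/- Let E be a real Banach space, U ⊆ E open, k ≥ 1, and X : U → E a vector field of class C^k that is Lipschitz on U. Then for every p₀ ∈ U there exist an open neighborhood U₀ ⊆ U of p₀ and a real number α > 0 such that there is a map 𝔽 : (−α, α) × U₀ → U satisfying: (i) 𝔽(0, x) = x for all x ∈ U₀; (ii) for each x ∈ U₀ the curve t ↦ 𝔽(t,x) is differentiable with ∂ₜ𝔽(t,x) = X(𝔽(t,x)) for all t ∈ (−α, α); (iii) 𝔽 is of class C^k jointly in (t,x); and (iv) any two curves satisfying (i)–(ii) with the same initial point agree on the intersection of their domains. -/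

import Mathlib

/-!
Following Robbin, rescale time: `t ↦ 𝔽 (a t) x` solves `γ' = a X(γ)`, `γ 0 = x`, that is
`γ = x + a ∫₀ X(γ)`. This is an equation for `γ` in the Banach space `C([-1, 1], E)`, with
parameters `(a, x)`. The map `γ ↦ X ∘ γ` is as smooth as `X`, so the equation is `C^k`, and at
`a = 0` its derivative in `γ` is the identity. The implicit function theorem therefore solves it
near `(0, p₀)` by curves `γ_{a,x}` depending on `(a, x)` in a `C^k` way. A single small `a` yields
the flow, `𝔽 t x = γ_{a,x} (t / a)`, and by uniqueness `𝔽 t x = γ_{t,x} 1`, which is `C^k` in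
`(t, x)`.

For uniqueness, `X` is locally Lipschitz because it is `C^1`, hence Lipschitz on the compact set
swept out by two solutions over a compact time interval.
-/

open Set Metric Topology

section Superposition

universe u v

variable {K : Type*} [TopologicalSpace K]

/-- The superposition (Nemytskii) operator `γ ↦ f ∘ γ` on spaces of continuous maps. As `f` need
only be continuous on a set containing the range of `γ`, it takes the value `0` at those `γ` for
which `f ∘ γ` is not continuous. -/
noncomputable def superposition {E F : Type*} [TopologicalSpace E] [TopologicalSpace F] [Zero F]
    (f : E → F) (γ : C(K, E)) : C(K, F) :=
  ContinuousMap.mkD (f ∘ γ) 0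

theorem superposition_apply {E F : Type*} [TopologicalSpace E] [TopologicalSpace F] [Zero F]
    {f : E → F} {U : Set E} (hf : ContinuousOn f U) {γ : C(K, E)} (hγ : range γ ⊆ U) (s : K) :
    superposition f γ s = f (γ s) :=
  ContinuousMap.mkD_apply_of_continuous
    (hf.comp_continuous γ.continuous (range_subset_iff.1 hγ))

theorem exists_pos_forall_ball_subset_and_dist_lt {E F : Type*} [PseudoMetricSpace E]
    [PseudoMetricSpace F] {f : E → F} {U C : Set E} (hU : IsOpen U) (hf : ContinuousOn f U)
    (hC : IsCompact C) (hCU : C ⊆ U) {ε : ℝ} (hε : 0 < ε) :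
    ∃ δ > 0, ∀ x ∈ C, ball x δ ⊆ U ∧ ∀ y ∈ ball x δ, dist (f y) (f x) < ε := by
  obtain ⟨δ₁, hδ₁, hthick⟩ := hC.exists_thickening_subset_open hU hCU
  obtain ⟨δ₂, hδ₂, hclose⟩ := mem_uniformity_dist.1 <|
    hC.uniformContinuousAt_of_continuousAt f
      (fun x hx ↦ hf.continuousAt (hU.mem_nhds (hCU hx))) (dist_mem_uniformity hε)
  refine ⟨min δ₁ δ₂, lt_min hδ₁ hδ₂, fun x hx ↦ ⟨?_, fun y hy ↦ ?_⟩⟩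
  · exact (ball_subset_ball (min_le_left _ _)).trans
      ((ball_subset_thickening hx δ₁).trans hthick)
  · rw [dist_comm]
    exact hclose ((mem_ball'.1 hy).trans_le (min_le_right _ _)) hx

variable [CompactSpace K]

theorem continuousOn_superposition {E F : Type*} [PseudoMetricSpace E] [PseudoMetricSpace F]
    [Zero F] {f : E → F} {U : Set E} (hU : IsOpen U) (hf : ContinuousOn f U) :
    ContinuousOn (superposition f) {γ : C(K, E) | range γ ⊆ U} := by
  refine fun γ hγ ↦ ContinuousAt.continuousWithinAt (continuousAt_iff.2 fun ε hε ↦ ?_)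
  obtain ⟨δ, hδ, hball⟩ := exists_pos_forall_ball_subset_and_dist_lt hU hf
    (isCompact_range γ.continuous) hγ hε
  refine ⟨δ, hδ, fun {η} hη ↦ (ContinuousMap.dist_lt_iff hε).2 fun s ↦ ?_⟩
  have hηball (s : K) : η s ∈ ball (γ s) δ := (ContinuousMap.dist_apply_le_dist s).trans_lt hη
  have hηU : range η ⊆ U := range_subset_iff.2 fun s ↦ (hball _ (mem_range_self s)).1 (hηball s)
  rw [superposition_apply hf hηU, superposition_apply hf hγ]
  exact (hball _ (mem_range_self s)).2 _ (hηball s)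

variable {E F : Type*} [NormedAddCommGroup E] [NormedSpace ℝ E]
  [NormedAddCommGroup F] [NormedSpace ℝ F]

variable (K E F) in
/-- Pointwise application `(A, h) ↦ (s ↦ A s (h s))` as a continuous bilinear map. It expresses the
derivative of `superposition f` through `superposition (fderiv ℝ f)`. -/
noncomputable def pointwiseApply : C(K, E →L[ℝ] F) →L[ℝ] C(K, E) →L[ℝ] C(K, F) :=
  LinearMap.mkContinuous₂
    (LinearMap.mk₂ ℝ
      (fun (A : C(K, E →L[ℝ] F)) (h : C(K, E)) ↦ (⟨fun s ↦ A s (h s), by fun_prop⟩ : C(K, F)))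
      (fun _ _ _ ↦ by ext; simp) (fun _ _ _ ↦ by ext; simp)
      (fun _ _ _ ↦ by ext; simp) (fun _ _ _ ↦ by ext; simp))
    1 fun A h ↦ by
      rw [one_mul, ContinuousMap.norm_le _ (by positivity)]
      exact fun s ↦ (A s).le_of_opNorm_le_of_le (A.norm_coe_le_norm s) (h.norm_coe_le_norm s)

@[simp]
theorem pointwiseApply_apply (A : C(K, E →L[ℝ] F)) (h : C(K, E)) (s : K) :
    pointwiseApply K E F A h s = A s (h s) :=
  rfl

theorem hasFDerivAt_superposition {f : E → F} {U : Set E} (hU : IsOpen U)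
    (hf : DifferentiableOn ℝ f U) (hf' : ContinuousOn (fderiv ℝ f) U) {γ : C(K, E)}
    (hγ : range γ ⊆ U) :
    HasFDerivAt (superposition f) (pointwiseApply K E F (superposition (fderiv ℝ f) γ)) γ := by
  refine .of_isLittleO (Asymptotics.isLittleO_iff.2 fun ε hε ↦ ?_)
  obtain ⟨δ, hδ, hball⟩ := exists_pos_forall_ball_subset_and_dist_lt hU hf'
    (isCompact_range γ.continuous) hγ hε
  filter_upwards [ball_mem_nhds γ hδ] with η hη
  have hηball (s : K) : η s ∈ ball (γ s) δ := (ContinuousMap.dist_apply_le_dist s).trans_lt hη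
  have hηU : range η ⊆ U := range_subset_iff.2 fun s ↦ (hball _ (mem_range_self s)).1 (hηball s)
  refine (ContinuousMap.norm_le _ (by positivity)).2 fun s ↦ ?_
  obtain ⟨hballU, hclose⟩ := hball _ (mem_range_self s)
  have hmean : ‖f (η s) - f (γ s) - fderiv ℝ f (γ s) (η s - γ s)‖ ≤ ε * ‖η s - γ s‖ :=
    (convex_ball (γ s) δ).norm_image_sub_le_of_norm_hasFDerivWithin_le'
      (fun y hy ↦ (hf.hasFDerivAt (hU.mem_nhds (hballU hy))).hasFDerivWithinAt)
      (fun y hy ↦ (dist_eq_norm _ _).symm.trans_le (hclose y hy).le) (mem_ball_self hδ) (hηball s)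
  simp only [ContinuousMap.sub_apply, pointwiseApply_apply, superposition_apply hf.continuousOn hηU,
    superposition_apply hf.continuousOn hγ, superposition_apply hf' hγ]
  exact hmean.trans (by gcongr; exact (η - γ).norm_coe_le_norm s)

-- `F` lives in a universe above that of `E` so that the induction can pass from `F` to `E →L[ℝ] F`.
theorem contDiffOn_superposition {E : Type u} {F : Type (max u v)} [NormedAddCommGroup E]
    [NormedSpace ℝ E] [NormedAddCommGroup F] [NormedSpace ℝ F] {n : ℕ∞} {f : E → F} {U : Set E}
    (hU : IsOpen U) (hf : ContDiffOn ℝ n f U) :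
    ContDiffOn ℝ n (superposition f) {γ : C(K, E) | range γ ⊆ U} := by
  refine contDiffOn_iff_forall_nat_le.2 fun m hm ↦ ?_
  replace hf := hf.of_le (mod_cast hm : (m : WithTop ℕ∞) ≤ n)
  clear hm
  induction m generalizing F with
  | zero => exact contDiffOn_zero.2 (continuousOn_superposition hU (contDiffOn_zero.1 hf))
  | succ m ih =>
    push_cast at hf ⊢
    obtain ⟨hfdiff, -, hf'⟩ := (contDiffOn_succ_iff_fderiv_of_isOpen hU).1 hf
    have hderiv {γ : C(K, E)} (hγ : range γ ⊆ U) :=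
      hasFDerivAt_superposition hU hfdiff hf'.continuousOn hγ
    refine (contDiffOn_succ_iff_fderiv_of_isOpen
      (ContinuousMap.isOpen_setOfPred_range_subset hU)).2
        ⟨fun γ hγ ↦ (hderiv hγ).differentiableAt.differentiableWithinAt, by simp, ?_⟩
    have hpointwise : ContDiff ℝ m (pointwiseApply K E F) := by fun_prop
    exact (hpointwise.comp_contDiffOn (ih hf')).congr fun γ hγ ↦ (hderiv hγ).fderiv

end Superposition

section Solution

variable {E : Type*} [NormedAddCommGroup E] [NormedSpace ℝ E]

/-- `γ` solves the initial value problem `γ' = X(γ)`, `γ 0 = x` on the time set `J`, without leaving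
`U`. Derivatives are taken within `J`. -/
structure IsSolutionOn (γ : ℝ → E) (X : E → E) (U : Set E) (x : E) (J : Set ℝ) : Prop where
  map_zero : γ 0 = x
  mapsTo : MapsTo γ J U
  isIntegralCurveOn : IsIntegralCurveOn γ (fun _ ↦ X) J

namespace IsSolutionOn

variable {γ η : ℝ → E} {X : E → E} {U : Set E} {x : E} {I J : Set ℝ}

theorem mono (hγ : IsSolutionOn γ X U x J) (hIJ : I ⊆ J) : IsSolutionOn γ X U x I :=
  ⟨hγ.map_zero, hγ.mapsTo.mono_left hIJ, hγ.isIntegralCurveOn.mono hIJ⟩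

theorem comp_mul (hγ : IsSolutionOn γ X U x J) (r : ℝ) :
    IsSolutionOn (fun t ↦ γ (t * r)) (r • X) U x {t | t * r ∈ J} where
  map_zero := by rw [zero_mul, hγ.map_zero]
  mapsTo _ ht := hγ.mapsTo ht
  isIntegralCurveOn := hγ.isIntegralCurveOn.comp_mul r

theorem eqOn_Icc (hX : LocallyLipschitzOn U X) {b : ℝ} (hγ : IsSolutionOn γ X U x (Icc 0 b))
    (hη : IsSolutionOn η X U x (Icc 0 b)) : EqOn γ η (Icc 0 b) := by
  let C := γ '' Icc 0 b ∪ η '' Icc 0 b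
  have hC : IsCompact C :=
    (isCompact_Icc.image_of_continuousOn hγ.isIntegralCurveOn.continuousOn).union
      (isCompact_Icc.image_of_continuousOn hη.isIntegralCurveOn.continuousOn)
  obtain ⟨L, hL⟩ := LocallyLipschitzOn.exists_lipschitzOnWith_of_compact hC
    (hX.mono (union_subset hγ.mapsTo.image_subset hη.mapsTo.image_subset))
  have hderiv {ζ : ℝ → E} (hζ : IsSolutionOn ζ X U x (Icc 0 b)) :
      ∀ t ∈ Ico 0 b, HasDerivWithinAt ζ (X (ζ t)) (Ici t) t := fun t ht ↦
    (hζ.isIntegralCurveOn t (Ico_subset_Icc_self ht)).mono_of_mem_nhdsWithin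
      (Icc_mem_nhdsGE_of_mem ht)
  exact ODE_solution_unique_of_mem_Icc_right (fun _ _ ↦ hL)
    hγ.isIntegralCurveOn.continuousOn (hderiv hγ)
    (fun _ ht ↦ .inl (mem_image_of_mem γ (Ico_subset_Icc_self ht)))
    hη.isIntegralCurveOn.continuousOn (hderiv hη)
    (fun _ ht ↦ .inr (mem_image_of_mem η (Ico_subset_Icc_self ht)))
    (hγ.map_zero.trans hη.map_zero.symm)

theorem comp_mul_Icc (hγ : IsSolutionOn γ X U x J) (hJ : J.OrdConnected) (h0 : 0 ∈ J) {t : ℝ}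
    (ht : t ∈ J) : IsSolutionOn (fun s ↦ γ (s * t)) (t • X) U x (Icc 0 1) :=
  (hγ.comp_mul t).mono fun _ hs ↦ (hJ.convex.starConvex h0).smul_mem ht hs.1 hs.2

theorem apply_eq_apply_one (hX : LocallyLipschitzOn U X) (hγ : IsSolutionOn γ X U x J)
    (hJ : J.OrdConnected) (h0 : 0 ∈ J) {t : ℝ} (ht : t ∈ J)
    (hη : IsSolutionOn η (t • X) U x (Icc 0 1)) : γ t = η 1 := by
  have hsmul : LocallyLipschitzOn U (t • X) := fun y hy ↦
    let ⟨L, V, hV, hL⟩ := hX hy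
    ⟨‖t‖₊ * L, V, hV, (lipschitzWith_smul t).comp_lipschitzOnWith hL⟩
  simpa only [one_mul] using
    eqOn_Icc hsmul (hγ.comp_mul_Icc hJ h0 ht) hη (right_mem_Icc.2 zero_le_one)

theorem eqOn (hX : LocallyLipschitzOn U X) (hγ : IsSolutionOn γ X U x J)
    (hη : IsSolutionOn η X U x J) (hJ : J.OrdConnected) (h0 : 0 ∈ J) : EqOn γ η J := fun t ht ↦ by
  simpa only [one_mul] using hγ.apply_eq_apply_one hX hJ h0 ht (hη.comp_mul_Icc hJ h0 ht)

end IsSolutionOn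

theorem locallyLipschitzOn_of_contDiffOn {F : Type*} [NormedAddCommGroup F]
    [NormedSpace ℝ F] {f : E → F} {U : Set E} (hU : IsOpen U) (hf : ContDiffOn ℝ 1 f U) :
    LocallyLipschitzOn U f := fun x hx ↦ by
  obtain ⟨L, V, hV, hL⟩ := (hf.contDiffAt (hU.mem_nhds hx)).exists_lipschitzOnWith
  exact ⟨L, V, mem_nhdsWithin_of_mem_nhds hV, hL⟩

end Solution

section Picard

variable {E : Type*} [NormedAddCommGroup E] [NormedSpace ℝ E] {a b : ℝ}

/-- The operator `η ↦ ∫₀ η` on continuous curves over a compact interval containing `0`. -/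
noncomputable def primitive (h0 : (0 : ℝ) ∈ Icc a b) : C(Icc a b, E) →L[ℝ] C(Icc a b, E) :=
  have hint (η : C(Icc a b, E)) (c d : ℝ) :
      IntervalIntegrable (IccExtend (h0.1.trans h0.2) η) MeasureTheory.volume c d :=
    (η.continuous.Icc_extend' (h := h0.1.trans h0.2)).intervalIntegrable c d
  LinearMap.mkContinuous
    { toFun := fun η ↦ ⟨fun s ↦ ∫ τ in (0 : ℝ)..s, IccExtend (h0.1.trans h0.2) η τ,
        (intervalIntegral.continuous_primitive (hint η) 0).comp continuous_subtype_val⟩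
      map_add' := fun η ζ ↦ by
        ext s
        exact intervalIntegral.integral_add (hint η 0 s) (hint ζ 0 s)
      map_smul' := fun r η ↦ by
        ext s
        exact intervalIntegral.integral_smul r (IccExtend (h0.1.trans h0.2) η) }
    (b - a) fun η ↦ by
      have hlen (s : Icc a b) : |(s : ℝ) - 0| ≤ b - a :=
        abs_sub_le_of_le_of_le s.2.1 s.2.2 h0.1 h0.2
      refine (ContinuousMap.norm_le _ (mul_nonneg
        (sub_nonneg.2 (h0.1.trans h0.2)) (norm_nonneg η))).2 fun s ↦ ?_
      calc _ ≤ ‖η‖ * |(s : ℝ) - 0| := intervalIntegral.norm_integral_le_of_norm_le_const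
            fun τ _ ↦ η.norm_coe_le_norm _
        _ ≤ (b - a) * ‖η‖ := by rw [mul_comm]; gcongr; exact hlen s

theorem primitive_apply (h0 : (0 : ℝ) ∈ Icc a b) (η : C(Icc a b, E)) (s : Icc a b) :
    primitive h0 η s = ∫ τ in (0 : ℝ)..s, IccExtend (h0.1.trans h0.2) η τ :=
  rfl

/-- The defect of `γ` in the integral equation `γ = x + r ∫₀ X(γ)`, as a function of
`((r, x), γ)`. -/
noncomputable def picardDefect (h0 : (0 : ℝ) ∈ Icc a b) (X : E → E)
    (p : (ℝ × E) × C(Icc a b, E)) : C(Icc a b, E) :=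
  p.2 - ContinuousLinearMap.const ℝ (Icc a b) p.1.2 - p.1.1 • primitive h0 (superposition X p.2)

variable {h0 : (0 : ℝ) ∈ Icc a b} {X : E → E} {U : Set E} {γ : C(Icc a b, E)}

theorem isSolutionOn_of_picardDefect_eq_zero [CompleteSpace E] (hX : ContinuousOn X U)
    (hγ : range γ ⊆ U) {r : ℝ} {x : E} (h : picardDefect h0 X ((r, x), γ) = 0) :
    IsSolutionOn (IccExtend (h0.1.trans h0.2) γ) (r • X) U x (Icc a b) := by
  let v := IccExtend (h0.1.trans h0.2) (superposition X γ)
  have hv : Continuous v := (superposition X γ).continuous.Icc_extend'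
  have hint : ∀ t ∈ Icc a b,
      IccExtend (h0.1.trans h0.2) γ t = x + r • ∫ τ in (0 : ℝ)..t, v τ := fun t ht ↦ by
    have hdefect : γ ⟨t, ht⟩ = x + r • primitive h0 (superposition X γ) ⟨t, ht⟩ := by
      rw [← sub_eq_zero, ← sub_sub]
      exact DFunLike.congr_fun h ⟨t, ht⟩
    rw [IccExtend_of_mem _ _ ht, hdefect, primitive_apply]
  refine ⟨by rw [hint 0 h0, intervalIntegral.integral_same, smul_zero, add_zero],
    fun t _ ↦ hγ (mem_range_self _), fun t ht ↦ ?_⟩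
  have hvt : v t = X (IccExtend (h0.1.trans h0.2) γ t) := superposition_apply hX hγ _
  have hderiv : HasDerivAt (fun t ↦ x + r • ∫ τ in (0 : ℝ)..t, v τ) (r • v t) t :=
    ((hv.integral_hasStrictDerivAt 0 t).hasDerivAt.const_smul r).const_add x
  rw [hvt] at hderiv
  exact hderiv.hasDerivWithinAt.congr hint (hint t ht)

theorem contDiffAt_picardDefect {n : ℕ∞} (hU : IsOpen U) (hX : ContDiffOn ℝ n X U)
    (hγ : range γ ⊆ U) (q : ℝ × E) : ContDiffAt ℝ n (picardDefect h0 X) (q, γ) := by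
  have hsuper : ContDiffAt ℝ n (fun p : (ℝ × E) × C(Icc a b, E) ↦ superposition X p.2) (q, γ) :=
    ((contDiffOn_superposition hU hX).contDiffAt
      ((ContinuousMap.isOpen_setOfPred_range_subset hU).mem_nhds hγ)).comp (q, γ) contDiffAt_snd
  unfold picardDefect
  fun_prop

theorem isInvertible_fderiv_picardDefect_comp_inr {x : E}
    (h : DifferentiableAt ℝ (picardDefect h0 X) ((0, x), γ)) :
    (fderiv ℝ (picardDefect h0 X) ((0, x), γ) ∘L .inr ℝ (ℝ × E) C(Icc a b, E)).IsInvertible := by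
  have hcomp := h.hasFDerivAt.comp γ (hasFDerivAt_prodMk_right (0, x) γ)
  have hid : HasFDerivAt (fun η ↦ picardDefect h0 X ((0, x), η)) (.id ℝ C(Icc a b, E)) γ := by
    simp only [picardDefect, zero_smul, sub_zero]
    exact (hasFDerivAt_id γ).sub_const _
  rw [hcomp.unique hid]
  exact ⟨.refl ℝ _, rfl⟩

theorem exists_contDiffAt_isSolutionOn_smul [CompleteSpace E] (h0 : (0 : ℝ) ∈ Icc a b)
    {k : ℕ} (hk : 1 ≤ k) (hU : IsOpen U) (hX : ContDiffOn ℝ k X U) {p₀ : E} (hp₀ : p₀ ∈ U) :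
    ∃ G : ℝ × E → C(Icc a b, E), ∀ᶠ q in 𝓝 ((0 : ℝ), p₀), ContDiffAt ℝ k G q ∧
      IsSolutionOn (IccExtend (h0.1.trans h0.2) (G q)) (q.1 • X) U q.2 (Icc a b) := by
  let c : C(Icc a b, E) := .const (Icc a b) p₀
  have hc : range c ⊆ U := range_subset_iff.2 fun _ ↦ hp₀
  have hk0 : (k : WithTop ℕ∞) ≠ 0 := by exact_mod_cast (Nat.one_le_iff_ne_zero.1 hk)
  have hsmooth : ContDiffAt ℝ k (picardDefect h0 X) ((0, p₀), c) :=
    contDiffAt_picardDefect (n := k) hU hX hc (0, p₀)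
  have hinv := isInvertible_fderiv_picardDefect_comp_inr (hsmooth.differentiableAt hk0)
  have hzero : picardDefect h0 X ((0, p₀), c) = 0 := by
    rw [picardDefect, zero_smul, sub_zero]
    exact sub_self c
  let G := hsmooth.implicitFunction hk0 hinv
  have hG : ContDiffAt ℝ k G (0, p₀) := hsmooth.contDiffAt_implicitFunction hk0 hinv
  have hGc : G (0, p₀) = c := hsmooth.implicitFunction_apply_self hk0 hinv
  have hGU : ∀ᶠ q in 𝓝 ((0 : ℝ), p₀), range (G q) ⊆ U :=
    hG.continuousAt.eventually_mem ((ContinuousMap.isOpen_setOfPred_range_subset hU).mem_nhds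
      (hGc.symm ▸ hc : range (G (0, p₀)) ⊆ U))
  refine ⟨G, ?_⟩
  filter_upwards [hG.eventually (by simp), hGU, hsmooth.eventually_apply_implicitFunction hk0 hinv]
    with q hGq hqU hq
  exact ⟨hGq, isSolutionOn_of_picardDefect_eq_zero hX.continuousOn hqU (hq.trans hzero)⟩

end Picard

theorem exists_isSolutionOn_contDiffOn {E : Type*} [NormedAddCommGroup E] [NormedSpace ℝ E]
    [CompleteSpace E] {X : E → E} {U : Set E} (hU : IsOpen U) {k : ℕ} (hk : 1 ≤ k)
    (hX : ContDiffOn ℝ k X U) {p₀ : E} (hp₀ : p₀ ∈ U) :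
    ∃ (V : Set E) (α : ℝ) (𝔽 : ℝ → E → E), IsOpen V ∧ p₀ ∈ V ∧ 0 < α ∧
      (∀ x ∈ V, IsSolutionOn (fun t ↦ 𝔽 t x) X U x (Ioo (-α) α)) ∧
      ContDiffOn ℝ k (fun p : ℝ × E ↦ 𝔽 p.1 p.2) (Ioo (-α) α ×ˢ V) := by
  have hLip : LocallyLipschitzOn U X :=
    locallyLipschitzOn_of_contDiffOn hU (hX.of_le (mod_cast hk))
  obtain ⟨G, hG⟩ := exists_contDiffAt_isSolutionOn_smul (a := -1) (b := 1) (by simp) hk hU hX hp₀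
  obtain ⟨δ, hδ, hbox⟩ := eventually_nhds_iff_ball.1 hG
  obtain ⟨α, hα, hαδ⟩ := exists_between hδ
  have hmem {t : ℝ} {x : E} (ht : |t| ≤ α) (hx : x ∈ ball p₀ δ) : (t, x) ∈ ball (0, p₀) δ := by
    rw [← ball_prod_same]
    exact ⟨by simpa using ht.trans_lt hαδ, hx⟩
  let 𝔽 (t : ℝ) (x : E) : E := IccExtend (by norm_num) (G (α, x)) (t * α⁻¹)
  have hflow : ∀ x ∈ ball p₀ δ, IsSolutionOn (fun t ↦ 𝔽 t x) X U x (Ioo (-α) α) := fun x hx ↦ by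
    have hrescaled := (hbox _ (hmem (abs_of_pos hα).le hx)).2.comp_mul α⁻¹
    rw [inv_smul_smul₀ hα.ne'] at hrescaled
    refine hrescaled.mono fun t ht ↦ abs_le.1 ?_
    rw [abs_mul, abs_inv, abs_of_pos hα, ← div_eq_mul_inv]
    exact div_le_one_of_le₀ (abs_lt.2 ht).le hα.le
  let one : Icc (-1 : ℝ) 1 := ⟨1, right_mem_Icc.2 (by norm_num)⟩
  have heval : ∀ p ∈ Ioo (-α) α ×ˢ ball p₀ δ, 𝔽 p.1 p.2 = G p one := fun (t, x) ⟨ht, hx⟩ ↦ by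
    have hη := (hbox (t, x) (hmem (abs_lt.2 ht).le hx)).2.mono
      (Icc_subset_Icc_left (neg_nonpos.2 zero_le_one))
    exact ((hflow x hx).apply_eq_apply_one hLip ordConnected_Ioo ⟨neg_lt_zero.2 hα, hα⟩ ht hη).trans
      (IccExtend_right _ _)
  refine ⟨ball p₀ δ, α, 𝔽, isOpen_ball, mem_ball_self hδ, hα, hflow, ContDiffOn.congr ?_ heval⟩
  refine (ContinuousMap.evalCLM (M := E) ℝ one).contDiff.comp_contDiffOn fun p hp ↦ ?_
  exact (hbox p (hmem (abs_lt.2 hp.1).le hp.2)).1.contDiffWithinAt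

theorem local_flow_of_Ck_lipschitz_vector_field_general
    {E : Type*} [NormedAddCommGroup E] [NormedSpace ℝ E] [CompleteSpace E]
    {U : Set E} (hU : IsOpen U) (X : E → E) (k : ℕ) (hk : 1 ≤ k)
    (hXk : ContDiffOn ℝ k X U) (p₀ : E) (hp₀ : p₀ ∈ U) :
    ∃ (U₀ : Set E) (α : ℝ) (𝔽 : ℝ → E → E),
      IsOpen U₀ ∧ p₀ ∈ U₀ ∧ U₀ ⊆ U ∧ 0 < α ∧
      (∀ x ∈ U₀, 𝔽 0 x = x) ∧
      (∀ x ∈ U₀, ∀ t ∈ Set.Ioo (-α) α,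
        𝔽 t x ∈ U ∧ HasDerivAt (fun s => 𝔽 s x) (X (𝔽 t x)) t) ∧
      ContDiffOn ℝ k (fun p : ℝ × E => 𝔽 p.1 p.2) (Set.Ioo (-α) α ×ˢ U₀) ∧
      (∀ x ∈ U₀, ∀ J : Set ℝ, Convex ℝ J → (0 : ℝ) ∈ J → ∀ ℓ : ℝ → E,
        ℓ 0 = x → (∀ t ∈ J, ℓ t ∈ U ∧ HasDerivWithinAt ℓ (X (ℓ t)) J t) →
        ∀ t ∈ J ∩ Set.Ioo (-α) α, ℓ t = 𝔽 t x) := by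
  have hX : LocallyLipschitzOn U X :=
    locallyLipschitzOn_of_contDiffOn hU (hXk.of_le (mod_cast hk))
  obtain ⟨V, α, 𝔽, hV, hpV, hα, hsol, hsmooth⟩ := exists_isSolutionOn_contDiffOn hU hk hXk hp₀
  have h0 : (0 : ℝ) ∈ Ioo (-α) α := ⟨neg_lt_zero.2 hα, hα⟩
  refine ⟨V, α, 𝔽, hV, hpV, fun x hx ↦ ?_, hα, fun x hx ↦ (hsol x hx).map_zero,
    fun x hx t ht ↦ ⟨(hsol x hx).mapsTo ht, ?_⟩, hsmooth, fun x hx J hJ h0J ℓ hℓ0 hℓ t ht ↦ ?_⟩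
  · exact (hsol x hx).map_zero ▸ (hsol x hx).mapsTo h0
  · exact ((hsol x hx).isIntegralCurveOn t ht).hasDerivAt (isOpen_Ioo.mem_nhds ht)
  · have hℓsol : IsSolutionOn ℓ X U x J :=
      ⟨hℓ0, fun t ht ↦ (hℓ t ht).1, fun t ht ↦ (hℓ t ht).2⟩
    exact (hℓsol.mono inter_subset_left).eqOn hX ((hsol x hx).mono inter_subset_right)
      (hJ.ordConnected.inter ordConnected_Ioo) ⟨h0J, h0⟩ ht

/-- Let `E` be a real Banach space, `U ⊆ E` open, `k ≥ 1`, and `X : U → E` a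
vector field of class `C^k` that is Lipschitz on `U`.  Then for every `p₀ ∈ U` there are an
open neighborhood `U₀ ⊆ U` of `p₀`, a number `α > 0` and a local flow
`𝔽 : (-α, α) × U₀ → U` of `X`:  (i) `𝔽 0 x = x`;  (ii) `∂ₜ 𝔽(t,x) = X (𝔽(t,x))`;
(iii) `𝔽` is of class `C^k` jointly in `(t, x)`;  and (iv) any integral curve of `X` with the
same initial point agrees with `t ↦ 𝔽 t x` on the intersection of their domains. -/
theorem local_flow_of_Ck_lipschitz_vector_field
    {E : Type*} [NormedAddCommGroup E] [NormedSpace ℝ E] [CompleteSpace E]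
    {U : Set E} (hU : IsOpen U) (X : E → E) (k : ℕ) (hk : 1 ≤ k)
    (hXk : ContDiffOn ℝ k X U) (β : NNReal) (hLip : LipschitzOnWith β X U)
    (p₀ : E) (hp₀ : p₀ ∈ U) :
    ∃ (U₀ : Set E) (α : ℝ) (𝔽 : ℝ → E → E),
      IsOpen U₀ ∧ p₀ ∈ U₀ ∧ U₀ ⊆ U ∧ 0 < α ∧
      (∀ x ∈ U₀, 𝔽 0 x = x) ∧
      (∀ x ∈ U₀, ∀ t ∈ Set.Ioo (-α) α,
        𝔽 t x ∈ U ∧ HasDerivAt (fun s => 𝔽 s x) (X (𝔽 t x)) t) ∧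
      ContDiffOn ℝ k (fun p : ℝ × E => 𝔽 p.1 p.2) (Set.Ioo (-α) α ×ˢ U₀) ∧
      (∀ x ∈ U₀, ∀ J : Set ℝ, Convex ℝ J → (0 : ℝ) ∈ J → ∀ ℓ : ℝ → E,
        ℓ 0 = x → (∀ t ∈ J, ℓ t ∈ U ∧ HasDerivWithinAt ℓ (X (ℓ t)) J t) →
        ∀ t ∈ J ∩ Set.Ioo (-α) α, ℓ t = 𝔽 t x) :=
  local_flow_of_Ck_lipschitz_vector_field_general hU X k hk hXk p₀ hp₀
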